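/- There exists a constant c > 0 such that for every integer k ≥ 1: (i) {(x_{k+3,0} + x_{k,0})·ξ^j} ≤ c/X_k for j = 0, 1, 2, 3; (ii) {(x_{k+6,0} − x_{k,0})·ξ^j} ≤ c/X_k for j = 0, 1, 2, 3, 4, 5. -/

import Mathlib

open Polynomial Filter

noncomputable def gold : ℝ := (1 + Real.sqrt 5) / 2

def Mmat (k : ℕ) : Matrix (Fin 2) (Fin 2) ℤ := !![3, (-1)^k; (-1)^(k+1), 0]

noncomputable def Xnorm (x : ℕ → Matrix (Fin 2) (Fin 2) ℤ) (k : ℕ) : ℝ :=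
  max |(x k 0 0 : ℝ)| (max |(x k 0 1 : ℝ)| |(x k 1 1 : ℝ)|)

def MarkoffSeq (ξ : ℝ) (x : ℕ → Matrix (Fin 2) (Fin 2) ℤ) : Prop :=
  (∀ k, 1 ≤ k → x k 0 1 = x k 1 0) ∧
  (∀ k, 1 ≤ k → (x k).det = 1) ∧
  ∃ c₁ c₂ c₃ : ℝ, 0 < c₁ ∧ 0 < c₂ ∧ 0 < c₃ ∧ ∀ k, 1 ≤ k →
    (c₁ * Xnorm x k ^ gold ≤ Xnorm x (k+1) ∧ Xnorm x (k+1) ≤ c₂ * Xnorm x k ^ gold) ∧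
    (|(x k 0 0 : ℝ) * ξ - (x k 0 1 : ℝ)| ≤ c₃ / Xnorm x k ∧
     |(x k 0 1 : ℝ) * ξ - (x k 1 1 : ℝ)| ≤ c₃ / Xnorm x k) ∧
    (x (k+2) = x (k+1) * Mmat (k+1) * x k ∧ x (k+2) = x k * Mmat k * x (k+1)) ∧
    (Xnorm x k < Xnorm x (k+1) ∧ Xnorm x k < (1 + ξ^2) * |(x k 0 0 : ℝ)|)

def polyNorm (P : Polynomial ℤ) : ℕ := P.support.sup fun i => (P.coeff i).natAbs

noncomputable def distInt (η : ℝ) : ℝ := |η - round η|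

noncomputable def ratHeight (α : ℚ) : ℝ := max |(α.num : ℝ)| (α.den : ℝ)

def IsMinIntPoly (α : ℂ) (P : Polynomial ℤ) : Prop :=
  P ≠ 0 ∧ Polynomial.aeval α P = 0 ∧ P.content = 1 ∧ 0 < P.leadingCoeff ∧
  ∀ Q : Polynomial ℤ, Q ≠ 0 → Polynomial.aeval α Q = 0 → P.degree ≤ Q.degree

noncomputable def Qpoly (x : ℕ → Matrix (Fin 2) (Fin 2) ℤ) (k : ℕ) : Polynomial ℤ :=
  Polynomial.C (x k 0 1 * x (k+1) 1 1 - x k 1 1 * x (k+1) 0 1)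
  - Polynomial.C (x k 0 0 * x (k+1) 1 1 - x k 1 1 * x (k+1) 0 0) * Polynomial.X
  + Polynomial.C (x k 0 0 * x (k+1) 0 1 - x k 0 1 * x (k+1) 0 0) * Polynomial.X ^ 2

/-- The algebraic part of `MarkoffSeq`: symmetry, determinant one and the two product formulas. -/
structure SymmRecurrence (x : ℕ → Matrix (Fin 2) (Fin 2) ℤ) : Prop where
  symm : ∀ k, 1 ≤ k → x k 0 1 = x k 1 0
  det : ∀ k, 1 ≤ k → (x k).det = 1
  succ_mul : ∀ k, 1 ≤ k → x (k+2) = x (k+1) * Mmat (k+1) * x k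
  mul_succ : ∀ k, 1 ≤ k → x (k+2) = x k * Mmat k * x (k+1)

namespace SymmRecurrence

variable {x : ℕ → Matrix (Fin 2) (Fin 2) ℤ}

theorem det_entries (h : SymmRecurrence x) {k : ℕ} (hk : 1 ≤ k) :
    x k 0 0 * x k 1 1 - x k 0 1 ^ 2 = 1 := by
  have h1 := h.det k hk
  rw [Matrix.det_fin_two, ← h.symm k hk] at h1
  linear_combination h1

theorem mul_succ_entries (h : SymmRecurrence x) {k : ℕ} (hk : 1 ≤ k) :
    x (k+2) 0 0 = (3 * x k 0 0 - (-1)^k * x k 0 1) * x (k+1) 0 0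
      + (-1)^k * x k 0 0 * x (k+1) 0 1 ∧
    x (k+2) 0 1 = (3 * x k 0 0 - (-1)^k * x k 0 1) * x (k+1) 0 1
      + (-1)^k * x k 0 0 * x (k+1) 1 1 ∧
    x (k+2) 0 1 = (3 * x k 0 1 - (-1)^k * x k 1 1) * x (k+1) 0 0
      + (-1)^k * x k 0 1 * x (k+1) 0 1 ∧
    x (k+2) 1 1 = (3 * x k 0 1 - (-1)^k * x k 1 1) * x (k+1) 0 1
      + (-1)^k * x k 0 1 * x (k+1) 1 1 := by
  have e := h.mul_succ k hk
  have h0 := h.symm k hk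
  have h1 := h.symm (k+1) (by omega)
  have h2 := h.symm (k+2) (by omega)
  refine ⟨?_, ?_, ?_, ?_⟩
  · rw [e]; simp [Matrix.mul_apply, Fin.sum_univ_two, Mmat, ← h1, pow_succ]; ring
  · rw [e]; simp [Matrix.mul_apply, Fin.sum_univ_two, Mmat, pow_succ]; ring
  · rw [h2, e]; simp [Matrix.mul_apply, Fin.sum_univ_two, Mmat, ← h1, ← h0, pow_succ]; ring
  · rw [e]; simp [Matrix.mul_apply, Fin.sum_univ_two, Mmat, ← h0, pow_succ]; ring

theorem succ_mul_entries (h : SymmRecurrence x) {k : ℕ} (hk : 1 ≤ k) :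
    x (k+2) 0 1 = (3 * x (k+1) 0 1 + (-1)^k * x (k+1) 1 1) * x k 0 0
      - (-1)^k * x (k+1) 0 1 * x k 0 1 ∧
    x (k+2) 1 1 = (3 * x (k+1) 0 1 + (-1)^k * x (k+1) 1 1) * x k 0 1
      - (-1)^k * x (k+1) 0 1 * x k 1 1 := by
  have e := h.succ_mul k hk
  have h0 := h.symm k hk
  have h1 := h.symm (k+1) (by omega)
  have h2 := h.symm (k+2) (by omega)
  refine ⟨?_, ?_⟩
  · rw [h2, e]; simp [Matrix.mul_apply, Fin.sum_univ_two, Mmat, ← h1, ← h0, pow_succ]; ring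
  · rw [e]; simp [Matrix.mul_apply, Fin.sum_univ_two, Mmat, ← h1, pow_succ]; ring

/-- Entries of `x (k+2) * adjugate (x (k+1)) = x k * Mmat k`. -/
theorem adjugate_succ_entries (h : SymmRecurrence x) {k : ℕ} (hk : 1 ≤ k) :
    x (k+2) 0 1 * x (k+1) 0 0 - x (k+2) 0 0 * x (k+1) 0 1 = (-1)^k * x k 0 0 ∧
    x (k+2) 0 1 * x (k+1) 1 1 - x (k+2) 1 1 * x (k+1) 0 1
      = 3 * x k 0 1 - (-1)^k * x k 1 1 ∧
    x (k+2) 1 1 * x (k+1) 0 0 - x (k+2) 0 1 * x (k+1) 0 1 = (-1)^k * x k 0 1 := by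
  obtain ⟨h00, h01, h10, h11⟩ := h.mul_succ_entries hk
  have d := h.det_entries (k := k+1) (by omega)
  refine ⟨?_, ?_, ?_⟩
  · linear_combination x (k+1) 0 0 * h01 - x (k+1) 0 1 * h00 + (-1)^k * x k 0 0 * d
  · linear_combination x (k+1) 1 1 * h10 - x (k+1) 0 1 * h11
      + (3 * x k 0 1 - (-1)^k * x k 1 1) * d
  · linear_combination x (k+1) 0 0 * h11 - x (k+1) 0 1 * h10 + (-1)^k * x k 0 1 * d

/-- The lower left entry of `x (k+2) * adjugate (x k) = x (k+1) * Mmat (k+1)`. -/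
theorem adjugate_entry (h : SymmRecurrence x) {k : ℕ} (hk : 1 ≤ k) :
    x (k+2) 0 1 * x k 1 1 - x (k+2) 1 1 * x k 0 1
      = 3 * x (k+1) 0 1 + (-1)^k * x (k+1) 1 1 := by
  obtain ⟨h01, h11⟩ := h.succ_mul_entries hk
  linear_combination x k 1 1 * h01 - x k 0 1 * h11
    + (3 * x (k+1) 0 1 + (-1)^k * x (k+1) 1 1) * h.det_entries hk

/-- The Markoff-type relation `x (k+3) + x k = 3 * x (k+1) 0 0 • x (k+2)`. -/
theorem add_three_entries (h : SymmRecurrence x) {k : ℕ} (hk : 1 ≤ k) :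
    x (k+3) 0 0 + x k 0 0 = 3 * x (k+1) 0 0 * x (k+2) 0 0 ∧
    x (k+3) 0 1 + x k 0 1 = 3 * x (k+1) 0 0 * x (k+2) 0 1 ∧
    x (k+3) 1 1 + x k 1 1 = 3 * x (k+1) 0 0 * x (k+2) 1 1 := by
  obtain ⟨h00, h01, h10, h11⟩ := h.mul_succ_entries (k := k+1) (by omega)
  obtain ⟨r01, r10, r11⟩ := h.adjugate_succ_entries hk
  have e : ((-1 : ℤ)^k)^2 = 1 := by rw [← pow_mul, mul_comm, pow_mul]; simp
  rw [pow_succ] at h00 h01 h10 h11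
  refine ⟨?_, ?_, ?_⟩
  · linear_combination h00 - (-1)^k * r01 - x k 0 0 * e
  · linear_combination h01 - (-1)^k * r11 - x k 0 1 * e
  · linear_combination h11 + (-1)^k * r10 - 3 * r11 - x k 1 1 * e

end SymmRecurrence

theorem gold_mul_gold_sub_one : gold * (gold - 1) = 1 := by
  have h : Real.sqrt 5 ^ 2 = 5 := Real.sq_sqrt (by norm_num)
  unfold gold
  linear_combination h / 4

theorem one_le_gold : 1 ≤ gold := by
  have h : (1 : ℝ) ≤ Real.sqrt 5 := Real.one_le_sqrt.2 (by norm_num)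
  unfold gold
  linarith

theorem distInt_le_abs_sub (η : ℝ) (n : ℤ) : distInt η ≤ |η - n| :=
  round_le η n

namespace MarkoffSeq

variable {ξ : ℝ} {x : ℕ → Matrix (Fin 2) (Fin 2) ℤ}

theorem symmRecurrence (hx : MarkoffSeq ξ x) : SymmRecurrence x := by
  obtain ⟨hs, hd, c₁, c₂, c₃, -, -, -, h⟩ := hx
  exact ⟨hs, hd, fun k hk => (h k hk).2.2.1.1, fun k hk => (h k hk).2.2.1.2⟩

theorem one_le_Xnorm (hx : MarkoffSeq ξ x) {k : ℕ} (hk : 1 ≤ k) : 1 ≤ Xnorm x k := by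
  obtain ⟨-, -, c₁, c₂, c₃, -, -, -, h⟩ := hx
  have h1 := (h k hk).2.2.2.2
  have h0 : x k 0 0 ≠ 0 := by
    intro h0
    have h2 : 0 ≤ Xnorm x k := (abs_nonneg _).trans (le_max_left _ _)
    rw [h0] at h1
    simp at h1
    linarith
  have h2 : (1 : ℝ) ≤ |(x k 0 0 : ℝ)| := by exact_mod_cast Int.one_le_abs h0
  exact h2.trans (le_max_left _ _)

theorem Xnorm_pos (hx : MarkoffSeq ξ x) {k : ℕ} (hk : 1 ≤ k) : 0 < Xnorm x k :=
  zero_lt_one.trans_le (hx.one_le_Xnorm hk)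

theorem Xnorm_le_add (hx : MarkoffSeq ξ x) {k : ℕ} (hk : 1 ≤ k) (n : ℕ) :
    Xnorm x k ≤ Xnorm x (k + n) := by
  obtain ⟨-, -, c₁, c₂, c₃, -, -, -, h⟩ := hx
  induction n with
  | zero => exact le_rfl
  | succ n ih => exact ih.trans (h (k + n) (by omega)).2.2.2.1.le

theorem exists_Xnorm_mul_le (hx : MarkoffSeq ξ x) :
    ∃ K : ℝ, 0 < K ∧ ∀ k, 1 ≤ k → Xnorm x (k+1) * Xnorm x k ≤ K * Xnorm x (k+2) := by
  have hpos := fun k hk => hx.Xnorm_pos (k := k) hk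
  obtain ⟨-, -, c₁, c₂, c₃, hc₁, -, -, h⟩ := hx
  have hd : 0 < c₁ * c₁ ^ (gold - 1) := by positivity
  refine ⟨(c₁ * c₁ ^ (gold - 1))⁻¹, inv_pos.2 hd, fun k hk => ?_⟩
  have h0 := hpos k hk
  have h1 := hpos (k+1) (by omega)
  have hk0 := (h k hk).1.1
  have hk1 := (h (k+1) (by omega)).1.1
  have hg := one_le_gold
  have e0 : c₁ ^ (gold - 1) * Xnorm x k ≤ Xnorm x (k+1) ^ (gold - 1) := by
    calc c₁ ^ (gold - 1) * Xnorm x k = (c₁ * Xnorm x k ^ gold) ^ (gold - 1) := by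
          rw [Real.mul_rpow hc₁.le (by positivity), ← Real.rpow_mul h0.le,
            gold_mul_gold_sub_one, Real.rpow_one]
      _ ≤ _ := Real.rpow_le_rpow (by positivity) hk0 (by linarith)
  have e1 : Xnorm x (k+1) ^ gold = Xnorm x (k+1) * Xnorm x (k+1) ^ (gold - 1) := by
    rw [← Real.rpow_one_add' h1.le (by linarith)]
    congr 1
    ring
  rw [inv_mul_eq_div, le_div_iff₀ hd]
  calc Xnorm x (k+1) * Xnorm x k * (c₁ * c₁ ^ (gold - 1))
      = c₁ * (Xnorm x (k+1) * (c₁ ^ (gold - 1) * Xnorm x k)) := by ring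
    _ ≤ c₁ * (Xnorm x (k+1) * Xnorm x (k+1) ^ (gold - 1)) := by gcongr
    _ = c₁ * Xnorm x (k+1) ^ gold := by rw [e1]
    _ ≤ _ := hk1

end MarkoffSeq

/-- `f k = O(1 / X_k)`, uniformly over `k ≥ 1`. -/
def IsSmall (x : ℕ → Matrix (Fin 2) (Fin 2) ℤ) (f : ℕ → ℝ) : Prop :=
  f =O[𝓟 (Set.Ici 1)] fun k => (Xnorm x k)⁻¹

/-- The linear form `x_{k,0} ξ - x_{k,1}`. -/
def upperForm (ξ : ℝ) (x : ℕ → Matrix (Fin 2) (Fin 2) ℤ) (k : ℕ) : ℝ :=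
  x k 0 0 * ξ - x k 0 1

/-- The linear form `x_{k,1} ξ - x_{k,2}`. -/
def lowerForm (ξ : ℝ) (x : ℕ → Matrix (Fin 2) (Fin 2) ℤ) (k : ℕ) : ℝ :=
  x k 0 1 * ξ - x k 1 1

namespace IsSmall

variable {x : ℕ → Matrix (Fin 2) (Fin 2) ℤ} {f g : ℕ → ℝ}

theorem add (hf : IsSmall x f) (hg : IsSmall x g) : IsSmall x fun k => f k + g k :=
  Asymptotics.IsBigO.add hf hg

theorem sub (hf : IsSmall x f) (hg : IsSmall x g) : IsSmall x fun k => f k - g k :=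
  Asymptotics.IsBigO.sub hf hg

theorem const_mul (hf : IsSmall x f) (c : ℝ) : IsSmall x fun k => c * f k :=
  Asymptotics.IsBigO.const_mul_left hf c

theorem sign_mul (hf : IsSmall x f) : IsSmall x fun k => (-1)^k * f k := by
  refine Asymptotics.IsBigO.trans (Asymptotics.isBigO_of_le _ fun k => ?_) hf
  simp

theorem of_eq (hg : IsSmall x g) (h : ∀ k, 1 ≤ k → f k = g k) : IsSmall x f :=
  Asymptotics.IsBigO.congr' hg (eventually_principal.2 fun k hk => (h k hk).symm)
    EventuallyEq.rfl

theorem of_le {C : ℝ} (h : ∀ k, 1 ≤ k → |f k| ≤ C * (Xnorm x k)⁻¹) (hx : ∀ k, 0 ≤ Xnorm x k) :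
    IsSmall x f := by
  refine Asymptotics.isBigO_principal.2 ⟨C, fun k hk => ?_⟩
  rw [Real.norm_eq_abs, Real.norm_of_nonneg (inv_nonneg.2 (hx k))]
  exact h k hk

theorem exists_le (hf : IsSmall x f) (hx : ∀ k, 0 ≤ Xnorm x k) :
    ∃ C, ∀ k, 1 ≤ k → |f k| ≤ C / Xnorm x k := by
  obtain ⟨C, h⟩ := Asymptotics.isBigO_principal.1 hf
  refine ⟨C, fun k hk => ?_⟩
  have := h k hk
  rwa [Real.norm_eq_abs, Real.norm_of_nonneg (inv_nonneg.2 (hx k)), ← div_eq_mul_inv] at this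

end IsSmall

theorem Xnorm_nonneg (x : ℕ → Matrix (Fin 2) (Fin 2) ℤ) (k : ℕ) : 0 ≤ Xnorm x k :=
  (abs_nonneg _).trans (le_max_left _ _)

theorem abs_entry_le_Xnorm (x : ℕ → Matrix (Fin 2) (Fin 2) ℤ) (k : ℕ) :
    |(x k 0 0 : ℝ)| ≤ Xnorm x k ∧ |(x k 0 1 : ℝ)| ≤ Xnorm x k ∧ |(x k 1 1 : ℝ)| ≤ Xnorm x k := by
  simp [Xnorm]

namespace MarkoffSeq

variable {ξ : ℝ} {x : ℕ → Matrix (Fin 2) (Fin 2) ℤ}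

theorem isSmall_shift (hx : MarkoffSeq ξ x) {f : ℕ → ℝ} (hf : IsSmall x f) (n : ℕ) :
    IsSmall x fun k => f (k + n) := by
  obtain ⟨C, h⟩ := hf.exists_le (Xnorm_nonneg x)
  refine IsSmall.of_le (C := |C|) (fun k hk => ?_) (Xnorm_nonneg x)
  have h0 := hx.Xnorm_pos hk
  calc |f (k + n)| ≤ C / Xnorm x (k + n) := h (k + n) (by omega)
    _ ≤ |C| / Xnorm x k := by
      gcongr
      · exact le_abs_self C
      · exact hx.Xnorm_le_add hk n
    _ = _ := div_eq_mul_inv _ _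

theorem isSmall_upperForm (hx : MarkoffSeq ξ x) : IsSmall x (upperForm ξ x) := by
  obtain ⟨-, -, c₁, c₂, c₃, -, -, -, h⟩ := hx
  refine IsSmall.of_le (C := c₃) (fun k hk => ?_) (Xnorm_nonneg x)
  rw [← div_eq_mul_inv]
  exact (h k hk).2.1.1

theorem isSmall_lowerForm (hx : MarkoffSeq ξ x) : IsSmall x (lowerForm ξ x) := by
  obtain ⟨-, -, c₁, c₂, c₃, -, -, -, h⟩ := hx
  refine IsSmall.of_le (C := c₃) (fun k hk => ?_) (Xnorm_nonneg x)
  rw [← div_eq_mul_inv]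
  exact (h k hk).2.1.2

theorem isSmall_mul_add_two (hx : MarkoffSeq ξ x) {a f : ℕ → ℝ}
    (ha : ∀ k, 1 ≤ k → |a k| ≤ Xnorm x (k+1)) (hf : IsSmall x f) :
    IsSmall x fun k => a k * f (k+2) := by
  obtain ⟨C, hC⟩ := hf.exists_le (Xnorm_nonneg x)
  obtain ⟨K, hK, h⟩ := hx.exists_Xnorm_mul_le
  refine IsSmall.of_le (C := |C| * K) (fun k hk => ?_) (Xnorm_nonneg x)
  have h0 := hx.Xnorm_pos hk
  have h2 := hx.Xnorm_pos (k := k+2) (by omega)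
  have hl : |f (k+2)| ≤ |C| / Xnorm x (k+2) :=
    (hC (k+2) (by omega)).trans (by gcongr; exact le_abs_self C)
  rw [abs_mul, ← div_eq_mul_inv, le_div_iff₀ h0]
  calc |a k| * |f (k+2)| * Xnorm x k
      ≤ Xnorm x (k+1) * (|C| / Xnorm x (k+2)) * Xnorm x k := by
        gcongr
        · exact Xnorm_nonneg x (k+1)
        · exact ha k hk
    _ = |C| / Xnorm x (k+2) * (Xnorm x (k+1) * Xnorm x k) := by ring
    _ ≤ |C| / Xnorm x (k+2) * (K * Xnorm x (k+2)) :=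
        mul_le_mul_of_nonneg_left (h k hk) (by positivity)
    _ = |C| * K := by field_simp

theorem isSmall_upper_mul (hx : MarkoffSeq ξ x) {f : ℕ → ℝ} (hf : IsSmall x f) :
    IsSmall x fun k => x (k+1) 0 0 * f (k+2) :=
  hx.isSmall_mul_add_two (fun k _ => (abs_entry_le_Xnorm x (k+1)).1) hf

theorem isSmall_middle_mul (hx : MarkoffSeq ξ x) {f : ℕ → ℝ} (hf : IsSmall x f) :
    IsSmall x fun k => x (k+1) 0 1 * f (k+2) :=
  hx.isSmall_mul_add_two (fun k _ => (abs_entry_le_Xnorm x (k+1)).2.1) hf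

theorem isSmall_lower_mul (hx : MarkoffSeq ξ x) {f : ℕ → ℝ} (hf : IsSmall x f) :
    IsSmall x fun k => x (k+1) 1 1 * f (k+2) :=
  hx.isSmall_mul_add_two (fun k _ => (abs_entry_le_Xnorm x (k+1)).2.2) hf

end MarkoffSeq

/-- The integer close to `(x_{k+3,0} + x_{k,0}) ξ ^ 3`. -/
def cubeApprox (x : ℕ → Matrix (Fin 2) (Fin 2) ℤ) (k : ℕ) : ℤ :=
  3 * (x (k+2) 1 1 * x (k+1) 0 1 + (-1)^k * x k 1 1)

/-- The integer close to `(x_{k+6,0} - x_{k,0}) ξ ^ 4`. -/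
def fourthApprox (x : ℕ → Matrix (Fin 2) (Fin 2) ℤ) (k : ℕ) : ℤ :=
  3 * (x (k+5) 1 1 * x (k+4) 1 1 - x (k+2) 1 1 * x (k+1) 1 1) - 9 * (x (k+3) 1 1 - x k 1 1)
    - 6 * (-1)^k * cubeApprox x k

/-- The integer close to `(x_{k+6,0} - x_{k,0}) ξ ^ 5`. -/
def fifthApprox (x : ℕ → Matrix (Fin 2) (Fin 2) ℤ) (k : ℕ) : ℤ :=
  9 * (x (k+3) 1 1 * (x (k+4) 0 1 * x (k+4) 1 1 - x (k+2) 0 1 * x (k+2) 1 1)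
      - 3 * x (k+2) 0 1 * x (k+4) 1 1 + 2 * (-1)^k * x (k+2) 1 1 * x (k+4) 1 1
      - 3 * (-1)^k * x (k+3) 1 1)
    - 27 * cubeApprox x k - 18 * (-1)^k * x (k+2) 1 1 * x (k+1) 1 1 + 54 * (-1)^k * x k 1 1

theorem SymmRecurrence.lower_mul_lower_sub {x : ℕ → Matrix (Fin 2) (Fin 2) ℤ}
    (h : SymmRecurrence x) {k : ℕ} (hk : 1 ≤ k) :
    x (k+5) 1 1 * x (k+4) 1 1 - x (k+2) 1 1 * x (k+1) 1 1 =
      3 * (x (k+3) 1 1 * (x (k+4) 0 1 ^ 2 - x (k+2) 0 1 ^ 2) - 2 * x (k+3) 1 1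
        - 3 * x (k+4) 0 1 * x (k+2) 0 1 + 2 * (-1)^k * x (k+4) 0 1 * x (k+2) 1 1
        - 3 * (-1)^k * x (k+3) 0 1) := by
  obtain ⟨-, -, t5⟩ := h.add_three_entries (k := k+2) (by omega)
  obtain ⟨-, -, t4⟩ := h.add_three_entries (k := k+1) (by omega)
  obtain ⟨-, r10, r11⟩ := h.adjugate_succ_entries (k := k+2) (by omega)
  have s := h.adjugate_entry (k := k+2) (by omega)
  have d := h.det_entries (k := k+2) (by omega)
  have e : ((-1 : ℤ)^k)^2 = 1 := by rw [← pow_mul, mul_comm, pow_mul]; simp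
  simp only [pow_succ _ k, pow_succ _ (k+1), add_assoc, Nat.reduceAdd] at *
  linear_combination x (k+4) 1 1 * t5 - x (k+2) 1 1 * t4 + 3 * x (k+4) 1 1 * r11
    - 3 * x (k+4) 0 1 * r10 - 3 * (-1)^k * s - 3 * x (k+3) 1 1 * d - 3 * x (k+3) 1 1 * e

namespace MarkoffSeq

variable {ξ : ℝ} {x : ℕ → Matrix (Fin 2) (Fin 2) ℤ}

theorem lowerForm_add_three (hx : MarkoffSeq ξ x) {k : ℕ} (hk : 1 ≤ k) :
    lowerForm ξ x (k+3) + lowerForm ξ x k = 3 * x (k+1) 0 0 * lowerForm ξ x (k+2) := by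
  obtain ⟨-, t1, t2⟩ := hx.symmRecurrence.add_three_entries hk
  rify at t1 t2
  unfold lowerForm
  linear_combination ξ * t1 - t2

theorem isSmall_upper_mul_sq_sub (hx : MarkoffSeq ξ x) :
    IsSmall x fun k => x k 0 0 * ξ^2 - x k 1 1 :=
  ((hx.isSmall_upperForm.const_mul ξ).add hx.isSmall_lowerForm).of_eq fun k _ => by
    unfold upperForm lowerForm
    ring

theorem isSmall_lower_add_mul_sub_cubeApprox (hx : MarkoffSeq ξ x) :
    IsSmall x fun k => (x (k+3) 1 1 + x k 1 1) * ξ - cubeApprox x k := by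
  have hL := hx.isSmall_lowerForm
  refine (((hx.isSmall_middle_mul hL).const_mul 3).add (hL.sign_mul.const_mul 3)).of_eq
    fun k hk => ?_
  obtain ⟨-, -, t⟩ := hx.symmRecurrence.add_three_entries hk
  obtain ⟨-, -, r⟩ := hx.symmRecurrence.adjugate_succ_entries hk
  rify at t r
  simp only [lowerForm, cubeApprox]
  push_cast
  linear_combination ξ * t + 3 * ξ * r

theorem isSmall_add_mul_cube_sub (hx : MarkoffSeq ξ x) :
    IsSmall x fun k => (x (k+3) 0 0 + x k 0 0) * ξ^3 - cubeApprox x k := by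
  have h := hx.isSmall_upper_mul_sq_sub
  refine ((((hx.isSmall_shift h 3).add h).const_mul ξ).add
    hx.isSmall_lower_add_mul_sub_cubeApprox).of_eq fun k _ => ?_
  ring

theorem isSmall_cubeApprox_mul_sub (hx : MarkoffSeq ξ x) :
    IsSmall x fun k => cubeApprox x k * ξ - (3 * x (k+2) 1 1 * x (k+1) 1 1 - 9 * x k 1 1
      + 6 * (-1)^k * x k 1 1 * ξ) := by
  have hL := hx.isSmall_lowerForm
  refine (((hx.isSmall_lower_mul hL).const_mul 3).sub (hL.const_mul 9)).of_eq fun k hk => ?_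
  obtain ⟨-, r, -⟩ := hx.symmRecurrence.adjugate_succ_entries hk
  rify at r
  simp only [lowerForm, cubeApprox]
  push_cast
  linear_combination -3 * ξ * r

theorem isSmall_sub_mul_cube_sub (hx : MarkoffSeq ξ x) :
    IsSmall x fun k => (x (k+6) 0 0 - x k 0 0) * ξ^3 - (cubeApprox x (k+3) - cubeApprox x k) := by
  have h := hx.isSmall_add_mul_cube_sub
  refine ((hx.isSmall_shift h 3).sub h).of_eq fun k _ => ?_
  simp only [add_assoc, Nat.reduceAdd]
  ring

theorem isSmall_sub_mul_fourth_sub (hx : MarkoffSeq ξ x) :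
    IsSmall x fun k => (x (k+6) 0 0 - x k 0 0) * ξ^4 - fourthApprox x k := by
  have h := hx.isSmall_cubeApprox_mul_sub
  refine ((((hx.isSmall_sub_mul_cube_sub).const_mul ξ).add ((hx.isSmall_shift h 3).sub h)).sub
    (hx.isSmall_lower_add_mul_sub_cubeApprox.sign_mul.const_mul 6)).of_eq fun k _ => ?_
  simp only [add_assoc, Nat.reduceAdd, fourthApprox]
  push_cast
  ring

theorem isSmall_sq_sub_sq (hx : MarkoffSeq ξ x) :
    IsSmall x fun k => x (k+3) 1 1 * (x (k+4) 0 1 * lowerForm ξ x (k+4)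
      - x (k+2) 0 1 * lowerForm ξ x (k+2)) := by
  have h := hx.isSmall_lower_mul hx.isSmall_lowerForm
  have h' : IsSmall x fun k => x k 1 1 * lowerForm ξ x (k+2) :=
    hx.isSmall_mul_add_two
      (fun k hk => (abs_entry_le_Xnorm x k).2.2.trans (hx.Xnorm_le_add hk 1)) hx.isSmall_lowerForm
  refine ((hx.isSmall_shift (hx.isSmall_middle_mul h') 1).sub ((hx.isSmall_middle_mul h).add
    ((hx.isSmall_upper_mul h).sign_mul.const_mul 3))).of_eq fun k hk => ?_
  have l := hx.lowerForm_add_three (k := k+2) (by omega)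
  obtain ⟨-, t, -⟩ := hx.symmRecurrence.add_three_entries (k := k+1) (by omega)
  obtain ⟨r, -, -⟩ := hx.symmRecurrence.adjugate_succ_entries (k := k+1) (by omega)
  rify at t r
  simp only [pow_succ _ k, add_assoc, Nat.reduceAdd] at *
  linear_combination -x (k+3) 1 1 * x (k+2) 0 1 * l
    + x (k+3) 1 1 * lowerForm ξ x (k+4) * (t + 3 * r)

theorem isSmall_fourthApprox_mul_sub (hx : MarkoffSeq ξ x) :
    IsSmall x fun k => fourthApprox x k * ξ - fifthApprox x k := by
  have hL := hx.isSmall_lowerForm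
  have hL1 := hx.isSmall_shift hL 1
  refine ((((((hx.isSmall_sq_sub_sq.const_mul 9).sub
    ((hx.isSmall_shift (hx.isSmall_middle_mul hL1) 1).const_mul 27)).add
    ((hx.isSmall_shift (hx.isSmall_lower_mul hL1) 1).sign_mul.const_mul 18)).sub
    ((hx.isSmall_shift hL 3).sign_mul.const_mul 27)).sub
    (hx.isSmall_lower_add_mul_sub_cubeApprox.const_mul 27)).sub
    (hx.isSmall_cubeApprox_mul_sub.sign_mul.const_mul 6)).of_eq fun k hk => ?_
  have d := hx.symmRecurrence.lower_mul_lower_sub hk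
  have e : ((-1 : ℝ)^k)^2 = 1 := by rw [← pow_mul, mul_comm, pow_mul]; simp
  rify at d
  simp only [add_assoc, Nat.reduceAdd, fourthApprox, fifthApprox, lowerForm] at *
  push_cast
  linear_combination 3 * ξ * d - 36 * x k 1 1 * ξ * e

theorem isSmall_sub_mul_fifth_sub (hx : MarkoffSeq ξ x) :
    IsSmall x fun k => (x (k+6) 0 0 - x k 0 0) * ξ^5 - fifthApprox x k :=
  ((hx.isSmall_sub_mul_fourth_sub.const_mul ξ).add hx.isSmall_fourthApprox_mul_sub).of_eq
    fun k _ => by ring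

theorem exists_isSmall_add (hx : MarkoffSeq ξ x) {j : ℕ} (hj : j ≤ 3) :
    ∃ N : ℕ → ℤ, IsSmall x fun k => ((x (k+3) 0 0 + x k 0 0 : ℤ) : ℝ) * ξ^j - N k := by
  have extend {i : ℕ} {n : ℕ → ℤ} (h : IsSmall x fun k => x k 0 0 * ξ^i - n k) :
      ∃ N : ℕ → ℤ, IsSmall x fun k => ((x (k+3) 0 0 + x k 0 0 : ℤ) : ℝ) * ξ^i - N k :=
    ⟨fun k => n (k+3) + n k, ((hx.isSmall_shift h 3).add h).of_eq fun k _ => by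
      push_cast
      ring⟩
  interval_cases j
  · exact extend (n := fun k => x k 0 0) ((hx.isSmall_lowerForm.const_mul 0).of_eq
      fun k _ => by ring)
  · exact extend (n := fun k => x k 0 1) (hx.isSmall_upperForm.of_eq
      fun k _ => by simp [upperForm])
  · exact extend hx.isSmall_upper_mul_sq_sub
  · exact ⟨cubeApprox x, hx.isSmall_add_mul_cube_sub.of_eq fun k _ => by push_cast; ring⟩

theorem exists_isSmall_sub (hx : MarkoffSeq ξ x) {j : ℕ} (hj : j ≤ 5) :
    ∃ N : ℕ → ℤ, IsSmall x fun k => ((x (k+6) 0 0 - x k 0 0 : ℤ) : ℝ) * ξ^j - N k := by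
  obtain hj | rfl | rfl : j ≤ 3 ∨ j = 4 ∨ j = 5 := by omega
  · obtain ⟨N, h⟩ := hx.exists_isSmall_add hj
    refine ⟨fun k => N (k+3) - N k, ((hx.isSmall_shift h 3).sub h).of_eq fun k _ => ?_⟩
    simp only [add_assoc, Nat.reduceAdd]
    push_cast
    ring
  · exact ⟨fourthApprox x, hx.isSmall_sub_mul_fourth_sub.of_eq fun k _ => by push_cast; ring⟩
  · exact ⟨fifthApprox x, hx.isSmall_sub_mul_fifth_sub.of_eq fun k _ => by push_cast; ring⟩

/-- A uniform constant for finitely many exponents. -/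
theorem exists_distInt_le (hx : MarkoffSeq ξ x) {f : ℕ → ℕ → ℝ} {n : ℕ}
    (h : ∀ j ≤ n, ∃ N : ℕ → ℤ, IsSmall x fun k => f j k - N k) :
    ∃ c : ℝ, 0 < c ∧ ∀ k, 1 ≤ k → ∀ j ≤ n, distInt (f j k) ≤ c / Xnorm x k := by
  have hC : ∀ j, ∃ C : ℝ, j ≤ n → ∀ k, 1 ≤ k → distInt (f j k) ≤ C / Xnorm x k := by
    intro j
    by_cases hj : j ≤ n
    · obtain ⟨N, hN⟩ := h j hj
      obtain ⟨C, hC⟩ := hN.exists_le (Xnorm_nonneg x)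
      exact ⟨C, fun _ k hk => (distInt_le_abs_sub _ (N k)).trans (hC k hk)⟩
    · exact ⟨0, fun hj' => absurd hj' hj⟩
  choose C hC using hC
  refine ⟨∑ j ∈ Finset.range (n+1), |C j| + 1, by positivity, fun k hk j hj => ?_⟩
  have h0 := hx.Xnorm_pos hk
  refine (hC j hj k hk).trans ?_
  gcongr
  have h1 := Finset.single_le_sum (f := fun j => |C j|) (fun i _ => abs_nonneg (C i))
    (Finset.mem_range.2 (Nat.lt_succ_of_le hj))
  linarith [le_abs_self (C j)]

end MarkoffSeq

theorem stmt8 (ξ : ℝ) (x : ℕ → Matrix (Fin 2) (Fin 2) ℤ) (hx : MarkoffSeq ξ x) :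
    ∃ c : ℝ, 0 < c ∧ ∀ k, 1 ≤ k →
      (∀ j ≤ 3, distInt (((x (k+3) 0 0 + x k 0 0 : ℤ) : ℝ) * ξ^j) ≤ c / Xnorm x k) ∧
      (∀ j ≤ 5, distInt (((x (k+6) 0 0 - x k 0 0 : ℤ) : ℝ) * ξ^j) ≤ c / Xnorm x k) := by
  obtain ⟨c, hc, h⟩ := hx.exists_distInt_le fun j hj => hx.exists_isSmall_add (j := j) hj
  obtain ⟨d, hd, h'⟩ := hx.exists_distInt_le fun j hj => hx.exists_isSmall_sub (j := j) hj
  refine ⟨c + d, add_pos hc hd, fun k hk => ?_⟩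
  have h0 := hx.Xnorm_pos hk
  exact ⟨fun j hj => (h k hk j hj).trans (by gcongr; linarith),
    fun j hj => (h' k hk j hj).trans (by gcongr; linarith)⟩
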